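/- There exists a universal constant C > 0 such that for every q > 0 and every global C¹ solution (X,V) : ℝ → ℝ³ × ℝ³ of the repulsive Kepler ODE with X(t) ≠ 0 for all t and conserved energy H = a² (a > 0), the function τ ↦ |X(τ)|⁻² is integrable on ℝ and ∫_{−∞}^{∞} |X(τ)|⁻² dτ ≤ C·a/q. -/

import Mathlib

/-!
The radial velocity `w = ⟨X, V⟩ / |X| = d|X|/dt` satisfies
`w' = (|V|² - w²) / |X| + q / (2|X|²) ≥ q / (2|X|²)`:
the centrifugal term is nonnegative by Cauchy-Schwarz. Conservation of energy confines `w` to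
`[-a, a]`, so its total increase `∫ w'` is at most `2a`, whence `∫ |X|⁻² ≤ 4a/q`. The constant
`4` is sharp: on a radial orbit the centrifugal term vanishes and `w` increases from `-a` to `a`.
-/

open MeasureTheory

noncomputable section

/-- Euclidean three-space. -/
abbrev R3 : Type := EuclideanSpace ℝ (Fin 3)

section BoundedPrimitive

variable {f w w' : ℝ → ℝ} {m M : ℝ}

lemma intervalIntegrable_of_hasDerivAt_of_nonneg (hw : ∀ t, HasDerivAt w (w' t) t)
    (hw' : ∀ t, 0 ≤ w' t) (s t : ℝ) : IntervalIntegrable w' volume s t :=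
  intervalIntegral.intervalIntegrable_deriv_of_nonneg
    (fun τ _ => (hw τ).continuousAt.continuousWithinAt) (fun τ _ => hw τ) (fun τ _ => hw' τ)

lemma intervalIntegral_le_sub_of_hasDerivAt_of_nonneg_of_mem_Icc
    (hw : ∀ t, HasDerivAt w (w' t) t) (hw' : ∀ t, 0 ≤ w' t)
    (hmM : ∀ t, w t ∈ Set.Icc m M) (s t : ℝ) :
    ∫ τ in s..t, w' τ ≤ M - m := by
  rw [intervalIntegral.integral_eq_sub_of_hasDerivAt (fun τ _ => hw τ)
    (intervalIntegrable_of_hasDerivAt_of_nonneg hw hw' s t)]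
  exact sub_le_sub (hmM t).2 (hmM s).1

lemma integrable_of_hasDerivAt_of_nonneg_of_mem_Icc (hw : ∀ t, HasDerivAt w (w' t) t)
    (hw' : ∀ t, 0 ≤ w' t) (hmM : ∀ t, w t ∈ Set.Icc m M) : Integrable w' := by
  refine integrable_of_intervalIntegral_norm_bounded (M - m)
    (fun r => (intervalIntegrable_of_hasDerivAt_of_nonneg hw hw' (-r) r).1)
    Filter.tendsto_neg_atTop_atBot Filter.tendsto_id (.of_forall fun r => ?_)
  simpa only [Real.norm_of_nonneg (hw' _)] using
    intervalIntegral_le_sub_of_hasDerivAt_of_nonneg_of_mem_Icc hw hw' hmM (-r) r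

lemma integral_le_sub_of_hasDerivAt_of_nonneg_of_mem_Icc (hw : ∀ t, HasDerivAt w (w' t) t)
    (hw' : ∀ t, 0 ≤ w' t) (hmM : ∀ t, w t ∈ Set.Icc m M) : ∫ t, w' t ≤ M - m :=
  le_of_tendsto'
    (intervalIntegral_tendsto_integral (integrable_of_hasDerivAt_of_nonneg_of_mem_Icc hw hw' hmM)
      Filter.tendsto_neg_atTop_atBot Filter.tendsto_id)
    fun r => intervalIntegral_le_sub_of_hasDerivAt_of_nonneg_of_mem_Icc hw hw' hmM (-r) r

lemma integrable_and_integral_le_sub_of_le_deriv (hf : AEStronglyMeasurable f)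
    (hf0 : ∀ t, 0 ≤ f t) (hw : ∀ t, HasDerivAt w (w' t) t) (hfw : ∀ t, f t ≤ w' t)
    (hmM : ∀ t, w t ∈ Set.Icc m M) : Integrable f ∧ ∫ t, f t ≤ M - m := by
  have hw' : ∀ t, 0 ≤ w' t := fun t => (hf0 t).trans (hfw t)
  have hint : Integrable w' := integrable_of_hasDerivAt_of_nonneg_of_mem_Icc hw hw' hmM
  have hfint : Integrable f :=
    hint.mono' hf (.of_forall fun t => (Real.norm_of_nonneg (hf0 t)).trans_le (hfw t))
  exact ⟨hfint, (integral_mono hfint hint hfw).trans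
    (integral_le_sub_of_hasDerivAt_of_nonneg_of_mem_Icc hw hw' hmM)⟩

end BoundedPrimitive

section Radial

variable {E : Type*} [NormedAddCommGroup E] [InnerProductSpace ℝ E]

/-- The signed component of `v` in the direction of `x`, applied below to the velocity and to the
acceleration of a particle at position `x`. Division by zero makes it `0` at `x = 0`. -/
def radialComponent (x v : E) : ℝ :=
  inner ℝ x v / ‖x‖

lemma abs_radialComponent_le_norm (x v : E) : |radialComponent x v| ≤ ‖v‖ := by
  rw [radialComponent, abs_div, abs_norm]
  exact div_le_of_le_mul₀ (norm_nonneg x) (norm_nonneg v)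
    ((abs_real_inner_le_norm x v).trans_eq (mul_comm _ _))

lemma radialComponent_sq_le_norm_sq (x v : E) : radialComponent x v ^ 2 ≤ ‖v‖ ^ 2 :=
  sq_le_sq.mpr ((abs_radialComponent_le_norm x v).trans_eq (abs_norm v).symm)

lemma radialComponent_smul_self (c : ℝ) (x : E) : radialComponent x (c • x) = c * ‖x‖ := by
  rw [radialComponent, real_inner_smul_right, real_inner_self_eq_norm_mul_norm, mul_div_assoc,
    mul_self_div_self]

lemma hasDerivAt_norm_comp {X : ℝ → E} {v : E} {t : ℝ} (hX0 : X t ≠ 0)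
    (hX : HasDerivAt X v t) : HasDerivAt (fun s => ‖X s‖) (radialComponent (X t) v) t := by
  have h := hX.norm_sq.sqrt (pow_ne_zero 2 (norm_ne_zero_iff.mpr hX0))
  simp only [Real.sqrt_sq (norm_nonneg _)] at h
  exact h.congr_deriv (mul_div_mul_left _ _ two_ne_zero)

lemma hasDerivAt_radialComponent {X V : ℝ → E} {A : E} {t : ℝ} (hX0 : X t ≠ 0)
    (hX : HasDerivAt X (V t) t) (hV : HasDerivAt V A t) :
    HasDerivAt (fun s => radialComponent (X s) (V s))
      ((‖V t‖ ^ 2 - radialComponent (X t) (V t) ^ 2) / ‖X t‖ + radialComponent (X t) A) t := by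
  have hr : ‖X t‖ ≠ 0 := norm_ne_zero_iff.mpr hX0
  refine ((hX.inner ℝ hV).fun_div (hasDerivAt_norm_comp hX0 hX) hr).congr_deriv ?_
  simp only [radialComponent, real_inner_self_eq_norm_sq]
  field_simp
  ring

end Radial

section Kepler

variable {E : Type*} [NormedAddCommGroup E]

lemma radialComponent_kepler_acceleration [InnerProductSpace ℝ E] (q : ℝ) (x : E) :
    radialComponent x ((q / 2 / ‖x‖ ^ 3) • x) = q / 2 * (‖x‖ ^ 2)⁻¹ := by
  rw [radialComponent_smul_self]
  field_simp

lemma norm_le_of_kepler_energy_le {q a : ℝ} {x v : E} (hq : 0 ≤ q) (ha : 0 ≤ a)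
    (hE : ‖v‖ ^ 2 + q / ‖x‖ ≤ a ^ 2) : ‖v‖ ≤ a :=
  le_of_sq_le_sq ((le_add_of_nonneg_right (div_nonneg hq (norm_nonneg x))).trans hE) ha

theorem kepler_inverse_square_integral_general [InnerProductSpace ℝ E] {q a : ℝ} {X V : ℝ → E}
    (hq : 0 < q) (hX0 : ∀ t, X t ≠ 0) (hX : ∀ t, HasDerivAt X (V t) t)
    (hV : ∀ t, HasDerivAt V ((q / 2 / ‖X t‖ ^ 3) • X t) t) (hVa : ∀ t, ‖V t‖ ≤ a) :
    Integrable (fun τ : ℝ => (‖X τ‖ ^ 2)⁻¹) ∧ ∫ τ : ℝ, (‖X τ‖ ^ 2)⁻¹ ≤ 4 * a / q := by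
  have hXc : Continuous X := continuous_iff_continuousAt.mpr fun t => (hX t).continuousAt
  have hc : Continuous fun τ : ℝ => q / 2 * (‖X τ‖ ^ 2)⁻¹ :=
    ((hXc.norm.pow 2).inv₀ fun t => pow_ne_zero 2 (norm_ne_zero_iff.mpr (hX0 t))).const_mul (q / 2)
  have hw_mem : ∀ t, radialComponent (X t) (V t) ∈ Set.Icc (-a) a := fun t =>
    abs_le.mp ((abs_radialComponent_le_norm (X t) (V t)).trans (hVa t))
  have hw_deriv : ∀ t, q / 2 * (‖X t‖ ^ 2)⁻¹ ≤
      (‖V t‖ ^ 2 - radialComponent (X t) (V t) ^ 2) / ‖X t‖ +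
        radialComponent (X t) ((q / 2 / ‖X t‖ ^ 3) • X t) := fun t => by
    rw [radialComponent_kepler_acceleration]
    exact le_add_of_nonneg_left
      (div_nonneg (sub_nonneg.mpr (radialComponent_sq_le_norm_sq _ _)) (norm_nonneg _))
  obtain ⟨hint, hle⟩ := integrable_and_integral_le_sub_of_le_deriv hc.aestronglyMeasurable
    (fun t => by positivity) (fun t => hasDerivAt_radialComponent (hX0 t) (hX t) (hV t))
    hw_deriv hw_mem
  refine ⟨(integrable_const_mul_iff (half_pos hq).ne'.isUnit _).mp hint, ?_⟩
  rw [integral_const_mul] at hle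
  rw [le_div_iff₀ hq]
  linarith

end Kepler

/-- There is a universal constant `C > 0` such that for every `q > 0` and every global
solution of the repulsive Kepler ODE with `X(t) ≠ 0` and conserved energy
`|V(t)|² + q/|X(t)| = a²` (`a > 0`), the function `τ ↦ |X(τ)|⁻²` is integrable on `ℝ`
with `∫ |X(τ)|⁻² dτ ≤ C·a/q`. -/
theorem kepler_inverse_square_integral :
    ∃ C : ℝ, 0 < C ∧
      ∀ (q a : ℝ) (X V : ℝ → R3), 0 < q → 0 < a →
        (∀ t, X t ≠ 0) →
        (∀ t, HasDerivAt X (V t) t) →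
        (∀ t, HasDerivAt V ((q / 2 / ‖X t‖ ^ 3) • X t) t) →
        (∀ t, ‖V t‖ ^ 2 + q / ‖X t‖ = a ^ 2) →
        Integrable (fun τ : ℝ => (‖X τ‖ ^ 2)⁻¹) ∧
          ∫ τ : ℝ, (‖X τ‖ ^ 2)⁻¹ ≤ C * a / q :=
  ⟨4, four_pos, fun _ _ _ _ hq ha hX0 hX hV hE =>
    kepler_inverse_square_integral_general hq hX0 hX hV fun t =>
      norm_le_of_kepler_energy_le hq.le ha.le (hE t).le⟩
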